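/- The derivations R_τ and R_z of the polynomial ring ℂ[a,b,c,t₁,t₂] commute: R_τ ∘ R_z = R_z ∘ R_τ, i.e. their Lie bracket [R_τ, R_z] is the zero derivation. -/

import Mathlib

/-!
The bracket of two derivations is a derivation, and a derivation of a polynomial ring is determined
by its values on the variables. So it suffices to check `R_τ (R_z x) = R_z (R_τ x)` for the five
variables `x`, where both sides are computed by the Leibniz rule and agree as polynomials. For
`x = t₂` this says that `R_z t₃ = 0`, i.e. that `t₃` is constant along `R_z`.
-/

open MvPolynomial

noncomputable section

/-- The polynomial ring `ℂ[a,b,c,t₁,t₂]`. -/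
abbrev Poly5 := MvPolynomial (Fin 5) ℂ

def a : Poly5 := X 0
def b : Poly5 := X 1
def c : Poly5 := X 2
def t1 : Poly5 := X 3
def t2 : Poly5 := X 4
/-- `t₃` denotes the polynomial `4a³ − t₂a − b²`. -/
def t3 : Poly5 := 4 * a ^ 3 - t2 * a - b ^ 2

/-- The modular vector field `R_τ`, i.e. the ℂ-derivation of `ℂ[a,b,c,t₁,t₂]` with
`R_τ(a) = −2a² + 2at₁ + bc + t₂/3`, `R_τ(b) = 6a²c − (t₂/2)c − 3ab + 3bt₁`,
`R_τ(c) = ac + ct₁ − b/2`, `R_τ(t₁) = t₁² − t₂/12`, `R_τ(t₂) = 4t₁t₂ − 6t₃`. -/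
def Rτ : Derivation ℂ Poly5 Poly5 :=
  mkDerivation ℂ
    ![-2 * a ^ 2 + 2 * a * t1 + b * c + (1 / 3 : ℂ) • t2,
      6 * a ^ 2 * c - (1 / 2 : ℂ) • (t2 * c) - 3 * a * b + 3 * b * t1,
      a * c + c * t1 - (1 / 2 : ℂ) • b,
      t1 ^ 2 - (1 / 12 : ℂ) • t2,
      4 * t1 * t2 - 6 * t3]

/-- The modular vector field `R_z`, i.e. the ℂ-derivation of `ℂ[a,b,c,t₁,t₂]` with
`R_z(a) = b`, `R_z(b) = 6a² − t₂/2`, `R_z(c) = a + t₁`, `R_z(t₁) = 0`, `R_z(t₂) = 0`. -/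
def Rz : Derivation ℂ Poly5 Poly5 :=
  mkDerivation ℂ
    ![b, 6 * a ^ 2 - (1 / 2 : ℂ) • t2, a + t1, 0, 0]

lemma Rτ_a : Rτ a = -2 * a ^ 2 + 2 * a * t1 + b * c + (1 / 3 : ℂ) • t2 := by
  simp [Rτ, a, mkDerivation_X]

lemma Rτ_b : Rτ b = 6 * a ^ 2 * c - (1 / 2 : ℂ) • (t2 * c) - 3 * a * b + 3 * b * t1 := by
  simp [Rτ, b, mkDerivation_X]

lemma Rτ_c : Rτ c = a * c + c * t1 - (1 / 2 : ℂ) • b := by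
  simp [Rτ, c, mkDerivation_X]

lemma Rτ_t1 : Rτ t1 = t1 ^ 2 - (1 / 12 : ℂ) • t2 := by
  simp [Rτ, t1, mkDerivation_X]

lemma Rτ_t2 : Rτ t2 = 4 * t1 * t2 - 6 * t3 := by
  simp [Rτ, t2, mkDerivation_X]

lemma Rz_a : Rz a = b := by
  simp [Rz, a, mkDerivation_X]

lemma Rz_b : Rz b = 6 * a ^ 2 - (1 / 2 : ℂ) • t2 := by
  simp [Rz, b, mkDerivation_X]

lemma Rz_c : Rz c = a + t1 := by
  simp [Rz, c, mkDerivation_X]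

lemma Rz_t1 : Rz t1 = 0 := by
  simp [Rz, t1, mkDerivation_X]

lemma Rz_t2 : Rz t2 = 0 := by
  simp [Rz, t2, mkDerivation_X]

/-- `Derivation.map_natCast` for numeric literals, in a form `simp` can match. -/
lemma derivation_ofNat (D : Derivation ℂ Poly5 Poly5) (n : ℕ) [n.AtLeastTwo] :
    D (ofNat(n) : Poly5) = 0 :=
  D.map_natCast n

/-- `t₃` is constant along `R_z`, which acts on `(a, b)` as `∂/∂z` acts on the Weierstrass function and
its derivative; the equation `b ^ 2 = 4 * a ^ 3 - t2 * a - t3` is preserved. -/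
lemma Rz_t3 : Rz t3 = 0 := by
  simp only [t3, map_sub, Derivation.leibniz, Derivation.leibniz_pow, derivation_ofNat,
    Rz_a, Rz_b, Rz_t2, smul_eq_mul, nsmul_eq_mul]
  algebra

/-- The bracket vanishes on every variable, hence everywhere. -/
lemma bracket_eq_zero : ⁅Rτ, Rz⁆ = 0 := by
  apply MvPolynomial.derivation_ext
  intro i
  rw [Derivation.commutator_apply, Derivation.coe_zero, Pi.zero_apply, sub_eq_zero]
  fin_cases i
  · change Rτ (Rz a) = Rz (Rτ a)
    simp only [Rz_a, Rτ_b, Rτ_a, map_add, map_neg, Derivation.map_smul,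
      Derivation.leibniz, Derivation.leibniz_pow, derivation_ofNat,
      Rz_b, Rz_c, Rz_t1, Rz_t2, smul_eq_mul, nsmul_eq_mul]
    algebra
  · change Rτ (Rz b) = Rz (Rτ b)
    simp only [Rz_a, Rτ_b, Rτ_a, Rτ_t2, map_add, map_sub, Derivation.map_smul,
      Derivation.leibniz, Derivation.leibniz_pow, derivation_ofNat, t3,
      Rz_b, Rz_c, Rz_t1, Rz_t2, smul_eq_mul, nsmul_eq_mul]
    algebra
  · change Rτ (Rz c) = Rz (Rτ c)
    simp only [Rz_a, Rτ_a, Rτ_c, Rτ_t1, map_add, map_sub, Derivation.map_smul,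
      Derivation.leibniz, Rz_b, Rz_c, Rz_t1, smul_eq_mul]
    algebra
  · change Rτ (Rz t1) = Rz (Rτ t1)
    simp [Rz_t1, Rτ_t1, Rz_t2, Derivation.leibniz_pow]
  · change Rτ (Rz t2) = Rz (Rτ t2)
    simp [Rz_t1, Rτ_t2, Rz_t2, Rz_t3, Derivation.leibniz, derivation_ofNat]

/-- The derivations `R_τ` and `R_z` commute: their Lie bracket is zero. -/
theorem statement5 : (∀ f : Poly5, Rτ (Rz f) = Rz (Rτ f)) ∧ ⁅Rτ, Rz⁆ = 0 := by
  refine ⟨fun f => ?_, bracket_eq_zero⟩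
  rw [← sub_eq_zero, ← Derivation.commutator_apply, bracket_eq_zero, Derivation.coe_zero,
    Pi.zero_apply]

end
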